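/- arXiv:2307.03594 — 3 statements merged into one kernel-verified Lean document; each statement's English description precedes it below -/
import Mathlib

section
/- Let X, Y, Y', Y'' be real random variables on a common probability space such that Y, Y', Y'' are identically distributed, (X,Y') is countermonotonic, and (X,Y'') is comonotonic. Let g₁, g₂ : ℝ → ℝ be strictly increasing functions such that g₁∘X, g₂∘Y, g₂∘Y', g₂∘Y'' are integrable and the products (g₁∘X)·(g₂∘Y), (g₁∘X)·(g₂∘Y'), (g₁∘X)·(g₂∘Y'') are integrable. If Cov(g₁∘X, g₂∘Y) = Cov(g₁∘X, g₂∘Y''), then (X,Y) is comonotonic; if Cov(g₁∘X, g₂∘Y) = Cov(g₁∘X, g₂∘Y'), then (X,Y) is countermonotonic. -/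
open MeasureTheory

/-- `(X,Y)` is comonotonic: it has the same joint distribution as a pair of
nondecreasing functions of a single random variable. -/
def Comonotonic {Ω : Type*} [MeasurableSpace Ω] (μ : Measure Ω) (X Y : Ω → ℝ) : Prop :=
  ∃ (Z : Ω → ℝ) (ν₁ ν₂ : ℝ → ℝ), Measurable Z ∧ Monotone ν₁ ∧ Monotone ν₂ ∧
    μ.map (fun ω => (X ω, Y ω)) = μ.map (fun ω => (ν₁ (Z ω), ν₂ (Z ω)))

/-- `(X,Y)` is countermonotonic: it has the same joint distribution as a pair of a
nondecreasing and a nonincreasing function of a single random variable. -/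
def Countermonotonic {Ω : Type*} [MeasurableSpace Ω] (μ : Measure Ω) (X Y : Ω → ℝ) : Prop :=
  ∃ (Z : Ω → ℝ) (ν₁ ν₂ : ℝ → ℝ), Measurable Z ∧ Monotone ν₁ ∧ Antitone ν₂ ∧
    μ.map (fun ω => (X ω, Y ω)) = μ.map (fun ω => (ν₁ (Z ω), ν₂ (Z ω)))

/-- Covariance `Cov(U,V) = E[UV] − E[U]E[V]`. -/
noncomputable def covar {Ω : Type*} [MeasurableSpace Ω] (μ : Measure Ω) (U V : Ω → ℝ) : ℝ :=
  ∫ ω, U ω * V ω ∂μ - (∫ ω, U ω ∂μ) * (∫ ω, V ω ∂μ)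

open ProbabilityTheory Set

/-! Write `u - u'` as the integral over `s` of `1_{s < u} - 1_{s < u'}`. By Fubini's theorem, for
`Y` and `W` with the same law, `E[g₁(X) g₂(Y)] - E[g₁(X) g₂(W)]` is then the integral over `(s, t)`
of `P(g₁(X) > s, g₂(Y) > t) - P(g₁(X) > s, g₂(W) > t)` (Hoeffding's identity). If `(X, W)` is
comonotonic, this integrand is nonpositive, so equal expectations force it to vanish almost
everywhere, hence everywhere by right-continuity; thus `(X, Y)` and `(X, W)` have the same law. The
countermonotonic case follows by replacing `Y` with `-Y`. -/

/-- The indicator of the interval from `a` to `b`, counted with sign `-1` if `b < a`, so that its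
integral is `b - a`. It turns products of increments into integrals over the plane. -/
noncomputable def signedIco (a b s : ℝ) : ℝ :=
  (Iio b).indicator 1 s - (Iio a).indicator 1 s

theorem signedIco_eq_indicator_Ico_sub (a b s : ℝ) :
    signedIco a b s = (Ico a b).indicator 1 s - (Ico b a).indicator 1 s := by
  simp only [signedIco, indicator, mem_Iio, mem_Ico, Pi.one_apply]
  grind

theorem abs_signedIco (a b s : ℝ) :
    |signedIco a b s| = (Ico (min a b) (max a b)).indicator 1 s := by
  simp only [signedIco, indicator, mem_Iio, mem_Ico, Pi.one_apply]
  grind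

theorem integrable_indicator_Ico_one (a b : ℝ) :
    Integrable ((Ico a b).indicator (1 : ℝ → ℝ)) :=
  (integrable_indicator_iff measurableSet_Ico).2 (integrableOn_const (by simp))

theorem integrable_signedIco (a b : ℝ) : Integrable (signedIco a b) :=
  ((integrable_indicator_Ico_one a b).sub (integrable_indicator_Ico_one b a)).congr
    (.of_forall fun s => (signedIco_eq_indicator_Ico_sub a b s).symm)

theorem integral_signedIco (a b : ℝ) : ∫ s, signedIco a b s = b - a := by
  simp only [signedIco_eq_indicator_Ico_sub]
  rw [integral_sub (integrable_indicator_Ico_one a b) (integrable_indicator_Ico_one b a),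
    integral_indicator_one measurableSet_Ico, integral_indicator_one measurableSet_Ico,
    Real.volume_real_Ico, Real.volume_real_Ico]
  grind

theorem integral_abs_signedIco (a b : ℝ) : ∫ s, |signedIco a b s| = |b - a| := by
  simp only [abs_signedIco]
  rw [integral_indicator_one measurableSet_Ico, Real.volume_real_Ico_of_le min_le_max,
    max_sub_min_eq_abs]

@[fun_prop]
theorem measurable_signedIco {α : Type*} [MeasurableSpace α] {f g h : α → ℝ}
    (hf : Measurable f) (hg : Measurable g) (hh : Measurable h) :
    Measurable fun x => signedIco (f x) (g x) (h x) :=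
  (Measurable.ite (measurableSet_lt hh hg) measurable_const measurable_const).sub
    (Measurable.ite (measurableSet_lt hh hf) measurable_const measurable_const)

section Hoeffding

variable {Ω : Type*} [MeasurableSpace Ω] {μ : Measure Ω} {U U' V V' W : Ω → ℝ}

theorem integrable_signedIco_mul_signedIco [SFinite μ]
    (hU : Measurable U) (hU' : Measurable U') (hV : Measurable V) (hV' : Measurable V')
    (h : Integrable (fun ω => (U ω - U' ω) * (V ω - V' ω)) μ) :
    Integrable (Function.uncurry fun ω (p : ℝ × ℝ) =>
      signedIco (U' ω) (U ω) p.1 * signedIco (V' ω) (V ω) p.2) (μ.prod volume) := by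
  have hmeas : Measurable (Function.uncurry fun ω (p : ℝ × ℝ) =>
      signedIco (U' ω) (U ω) p.1 * signedIco (V' ω) (V ω) p.2) := by
    simp only [Function.uncurry_def]
    fun_prop
  refine (integrable_prod_iff hmeas.aestronglyMeasurable).2
    ⟨.of_forall fun ω =>
      (integrable_signedIco (U' ω) (U ω)).mul_prod (integrable_signedIco (V' ω) (V ω)), ?_⟩
  refine h.norm.congr (.of_forall fun ω => ?_)
  simp only [Function.uncurry_apply_pair, norm_mul, Real.norm_eq_abs]
  rw [Measure.volume_eq_prod, integral_prod_mul (fun s => |signedIco (U' ω) (U ω) s|)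
    (fun t => |signedIco (V' ω) (V ω) t|), integral_abs_signedIco, integral_abs_signedIco]

theorem integral_sub_mul_sub_eq_integral_integral_signedIco [SFinite μ]
    (hU : Measurable U) (hU' : Measurable U') (hV : Measurable V) (hV' : Measurable V')
    (h : Integrable (fun ω => (U ω - U' ω) * (V ω - V' ω)) μ) :
    ∫ ω, (U ω - U' ω) * (V ω - V' ω) ∂μ =
      ∫ p : ℝ × ℝ, ∫ ω, signedIco (U' ω) (U ω) p.1 * signedIco (V' ω) (V ω) p.2 ∂μ := by
  rw [← integral_integral_swap (integrable_signedIco_mul_signedIco hU hU' hV hV' h)]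
  refine integral_congr_ae (.of_forall fun ω => ?_)
  dsimp only
  rw [Measure.volume_eq_prod, integral_prod_mul (signedIco (U' ω) (U ω)) (signedIco (V' ω) (V ω)),
    integral_signedIco, integral_signedIco]

theorem integral_signedIco_zero_mul_signedIco [IsFiniteMeasure μ]
    (hU : Measurable U) (hV : Measurable V) (hW : Measurable W) (hVW : IdentDistrib V W μ μ)
    (s t : ℝ) :
    ∫ ω, signedIco 0 (U ω) s * signedIco (W ω) (V ω) t ∂μ =
      μ.real (U ⁻¹' Ioi s ∩ V ⁻¹' Ioi t) - μ.real (U ⁻¹' Ioi s ∩ W ⁻¹' Ioi t) := by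
  have hUs := hU (measurableSet_Ioi (a := s))
  have hVt := hV (measurableSet_Ioi (a := t))
  have hWt := hW (measurableSet_Ioi (a := t))
  have hint {A : Set Ω} (hA : MeasurableSet A) : Integrable (A.indicator (1 : Ω → ℝ)) μ :=
    (integrable_const 1).indicator hA
  have hint_sub {A B : Set Ω} (hA : MeasurableSet A) (hB : MeasurableSet B) :
      Integrable (fun ω => A.indicator (1 : Ω → ℝ) ω - B.indicator 1 ω) μ :=
    (hint hA).sub (hint hB)
  have hintegral_sub {A B : Set Ω} (hA : MeasurableSet A) (hB : MeasurableSet B) :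
      ∫ ω, (A.indicator (1 : Ω → ℝ) ω - B.indicator 1 ω) ∂μ = μ.real A - μ.real B := by
    rw [integral_sub (hint hA) (hint hB), integral_indicator_one hA, integral_indicator_one hB]
  have hexpand : ∀ ω, signedIco 0 (U ω) s * signedIco (W ω) (V ω) t =
      ((U ⁻¹' Ioi s ∩ V ⁻¹' Ioi t).indicator 1 ω - (U ⁻¹' Ioi s ∩ W ⁻¹' Ioi t).indicator 1 ω)
        - (Iio 0).indicator 1 s *
          ((V ⁻¹' Ioi t).indicator 1 ω - (W ⁻¹' Ioi t).indicator 1 ω) := by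
    intro ω
    simp only [signedIco, indicator, mem_inter_iff, mem_preimage, mem_Ioi, mem_Iio, Pi.one_apply]
    grind
  have hlaw : μ.real (V ⁻¹' Ioi t) = μ.real (W ⁻¹' Ioi t) :=
    congrArg ENNReal.toReal (hVW.measure_mem_eq measurableSet_Ioi)
  simp_rw [hexpand]
  rw [integral_sub (hint_sub (hUs.inter hVt) (hUs.inter hWt)) ((hint_sub hVt hWt).const_mul _),
    integral_const_mul, hintegral_sub (hUs.inter hVt) (hUs.inter hWt), hintegral_sub hVt hWt, hlaw,
    sub_self, mul_zero, sub_zero]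

theorem integrable_measureReal_sub_measureReal [IsFiniteMeasure μ]
    (hU : Measurable U) (hV : Measurable V) (hW : Measurable W) (hVW : IdentDistrib V W μ μ)
    (h : Integrable (fun ω => U ω * (V ω - W ω)) μ) :
    Integrable fun p : ℝ × ℝ =>
      μ.real (U ⁻¹' Ioi p.1 ∩ V ⁻¹' Ioi p.2) - μ.real (U ⁻¹' Ioi p.1 ∩ W ⁻¹' Ioi p.2) := by
  have h' : Integrable (fun ω => (U ω - 0) * (V ω - W ω)) μ := by simpa only [sub_zero] using h
  simpa only [Function.uncurry_apply_pair, integral_signedIco_zero_mul_signedIco hU hV hW hVW]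
    using (integrable_signedIco_mul_signedIco hU measurable_const hV hW h').integral_prod_right

theorem integral_mul_sub_eq_integral_measureReal_sub_measureReal [IsFiniteMeasure μ]
    (hU : Measurable U) (hV : Measurable V) (hW : Measurable W) (hVW : IdentDistrib V W μ μ)
    (h : Integrable (fun ω => U ω * (V ω - W ω)) μ) :
    ∫ ω, U ω * (V ω - W ω) ∂μ = ∫ p : ℝ × ℝ,
      (μ.real (U ⁻¹' Ioi p.1 ∩ V ⁻¹' Ioi p.2) - μ.real (U ⁻¹' Ioi p.1 ∩ W ⁻¹' Ioi p.2)) := by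
  have h' : Integrable (fun ω => (U ω - 0) * (V ω - W ω)) μ := by simpa only [sub_zero] using h
  simpa only [sub_zero, integral_signedIco_zero_mul_signedIco hU hV hW hVW] using
    integral_sub_mul_sub_eq_integral_integral_signedIco hU measurable_const hV hW h'

end Hoeffding

section Quadrants

variable {π ρ : Measure (ℝ × ℝ)}

theorem measure_ext_of_Ioi_prod_Ioi [IsFiniteMeasure π]
    (h : ∀ s t : ℝ, π (Ioi s ×ˢ Ioi t) = ρ (Ioi s ×ˢ Ioi t)) : π = ρ := by
  have hcover : ⋃ n : ℕ, Ioi (-n : ℝ) = univ := eq_univ_of_forall fun x => by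
    obtain ⟨n, hn⟩ := exists_nat_gt (-x)
    exact mem_iUnion.2 ⟨n, neg_lt.1 hn⟩
  have hmono : Monotone fun n : ℕ => Ioi (-n : ℝ) := fun m n hmn =>
    Ioi_subset_Ioi (neg_le_neg (Nat.cast_le.2 hmn))
  have hspan : IsCountablySpanning (range (Ioi : ℝ → Set ℝ)) :=
    ⟨fun n : ℕ => Ioi (-n : ℝ), fun n => mem_range_self _, hcover⟩
  have hgen : MeasurableSpace.generateFrom (range (Ioi : ℝ → Set ℝ)) = Real.measurableSpace :=
    (borel_eq_generateFrom_Ioi ℝ).symm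
  refine Measure.ext_of_generateFrom_of_iUnion _
    (fun n : ℕ => Ioi (-n : ℝ) ×ˢ Ioi (-n : ℝ)) (generateFrom_eq_prod hgen hgen hspan hspan).symm
    (isPiSystem_Ioi.prod isPiSystem_Ioi) ?_
    (fun n => mem_image2_of_mem (mem_range_self _) (mem_range_self _))
    (fun n => measure_ne_top _ _) ?_
  · rw [iUnion_prod_of_monotone hmono hmono, hcover, univ_prod_univ]
  · rintro _ ⟨_, ⟨s, rfl⟩, _, ⟨t, rfl⟩, rfl⟩
    exact h s t

theorem measure_Ioi_prod_Ioi_le_of_ae_le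
    (h : ∀ᵐ p : ℝ × ℝ, π (Ioi p.1 ×ˢ Ioi p.2) ≤ ρ (Ioi p.1 ×ˢ Ioi p.2)) (s t : ℝ) :
    π (Ioi s ×ˢ Ioi t) ≤ ρ (Ioi s ×ˢ Ioi t) := by
  obtain ⟨u, hu, hsu, hus⟩ := exists_seq_strictAnti_tendsto s
  obtain ⟨v, hv, htv, hvt⟩ := exists_seq_strictAnti_tendsto t
  have hmono_u : Monotone fun n => Ioi (u n) := fun m n hmn => Ioi_subset_Ioi (hu.antitone hmn)
  have hmono_v : Monotone fun n => Ioi (v n) := fun m n hmn => Ioi_subset_Ioi (hv.antitone hmn)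
  have hunion : Ioi s ×ˢ Ioi t = ⋃ n, Ioi (u n) ×ˢ Ioi (v n) := by
    rw [iUnion_prod_of_monotone hmono_u hmono_v,
      (isGLB_of_tendsto_atTop hu.antitone hus).iUnion_Ioi_eq,
      (isGLB_of_tendsto_atTop hv.antitone hvt).iUnion_Ioi_eq]
  rw [hunion, (hmono_u.set_prod hmono_v).measure_iUnion, ← hunion]
  refine iSup_le fun n => ?_
  -- A non-null set of corners `p` lies between `(s, t)` and `(u n, v n)`, so `h` applies to one.
  have hbox : volume (Ioo s (u n) ×ˢ Ioo t (v n)) ≠ 0 := by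
    simp [Measure.volume_eq_prod, Measure.prod_prod, hsu n, htv n]
  obtain ⟨p, ⟨⟨hsp, hpu⟩, htp, hpv⟩, hp⟩ :=
    ((frequently_ae_mem_iff.2 hbox).and_eventually h).exists
  calc π (Ioi (u n) ×ˢ Ioi (v n))
      ≤ π (Ioi p.1 ×ˢ Ioi p.2) := by gcongr
    _ ≤ ρ (Ioi p.1 ×ˢ Ioi p.2) := hp
    _ ≤ ρ (Ioi s ×ˢ Ioi t) := by gcongr

end Quadrants

section Monotonic

variable {Ω : Type*} [MeasurableSpace Ω] {μ : Measure Ω} {U V W X Y : Ω → ℝ} {g₁ g₂ : ℝ → ℝ}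

theorem measure_inter_preimage_Ioi_eq_of_integral_mul_eq [IsFiniteMeasure μ]
    (hU : Measurable U) (hV : Measurable V) (hW : Measurable W) (hVW : IdentDistrib V W μ μ)
    (hle : ∀ s t, μ (U ⁻¹' Ioi s ∩ V ⁻¹' Ioi t) ≤ μ (U ⁻¹' Ioi s ∩ W ⁻¹' Ioi t))
    (hUV : Integrable (fun ω => U ω * V ω) μ) (hUW : Integrable (fun ω => U ω * W ω) μ)
    (heq : ∫ ω, U ω * V ω ∂μ = ∫ ω, U ω * W ω ∂μ) (s t : ℝ) :
    μ (U ⁻¹' Ioi s ∩ V ⁻¹' Ioi t) = μ (U ⁻¹' Ioi s ∩ W ⁻¹' Ioi t) := by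
  have hint : Integrable (fun ω => U ω * (W ω - V ω)) μ :=
    (hUW.sub hUV).congr (.of_forall fun ω => (mul_sub (U ω) (W ω) (V ω)).symm)
  have hzero : ∫ p : ℝ × ℝ,
      (μ.real (U ⁻¹' Ioi p.1 ∩ W ⁻¹' Ioi p.2) - μ.real (U ⁻¹' Ioi p.1 ∩ V ⁻¹' Ioi p.2)) = 0 := by
    rw [← integral_mul_sub_eq_integral_measureReal_sub_measureReal hU hW hV hVW.symm hint]
    simp only [mul_sub]
    rw [integral_sub hUW hUV, heq, sub_self]
  have hnonneg : 0 ≤ fun p : ℝ × ℝ =>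
      μ.real (U ⁻¹' Ioi p.1 ∩ W ⁻¹' Ioi p.2) - μ.real (U ⁻¹' Ioi p.1 ∩ V ⁻¹' Ioi p.2) := fun p =>
    sub_nonneg.2 (ENNReal.toReal_mono (measure_ne_top _ _) (hle p.1 p.2))
  have hae : ∀ᵐ p : ℝ × ℝ,
      μ (U ⁻¹' Ioi p.1 ∩ W ⁻¹' Ioi p.2) ≤ μ (U ⁻¹' Ioi p.1 ∩ V ⁻¹' Ioi p.2) := by
    filter_upwards [(integral_eq_zero_iff_of_nonneg hnonneg
      (integrable_measureReal_sub_measureReal hU hW hV hVW.symm hint)).1 hzero] with p hp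
    exact ((measureReal_eq_measureReal_iff).1 (sub_eq_zero.1 hp)).le
  have hquad {T : Ω → ℝ} (hT : Measurable T) (s t : ℝ) :
      μ.map (fun ω => (U ω, T ω)) (Ioi s ×ˢ Ioi t) = μ (U ⁻¹' Ioi s ∩ T ⁻¹' Ioi t) :=
    Measure.map_apply (hU.prodMk hT) (measurableSet_Ioi.prod measurableSet_Ioi)
  refine (hle s t).antisymm ?_
  simp only [← hquad hV, ← hquad hW] at hae ⊢
  exact measure_Ioi_prod_Ioi_le_of_ae_le hae s t

theorem Comonotonic.measure_inter_preimage_eq_min (hX : Measurable X) (hY : Measurable Y)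
    (h : Comonotonic μ X Y) {A B : Set ℝ} (hA : IsUpperSet A) (hB : IsUpperSet B) :
    μ (X ⁻¹' A ∩ Y ⁻¹' B) = min (μ (X ⁻¹' A)) (μ (Y ⁻¹' B)) := by
  obtain ⟨Z, ν₁, ν₂, hZ, hν₁, hν₂, hlaw⟩ := h
  have hident : IdentDistrib (fun ω => (X ω, Y ω)) (fun ω => (ν₁ (Z ω), ν₂ (Z ω))) μ μ :=
    ⟨(hX.prodMk hY).aemeasurable,
      ((hν₁.measurable.comp hZ).prodMk (hν₂.measurable.comp hZ)).aemeasurable, hlaw⟩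
  have hmA := hA.ordConnected.measurableSet
  have hmB := hB.ordConnected.measurableSet
  have hjoint : μ (X ⁻¹' A ∩ Y ⁻¹' B) = μ (Z ⁻¹' (ν₁ ⁻¹' A) ∩ Z ⁻¹' (ν₂ ⁻¹' B)) :=
    hident.measure_mem_eq (hmA.prod hmB)
  have hfst : μ (X ⁻¹' A) = μ (Z ⁻¹' (ν₁ ⁻¹' A)) :=
    (hident.comp measurable_fst).measure_mem_eq hmA
  have hsnd : μ (Y ⁻¹' B) = μ (Z ⁻¹' (ν₂ ⁻¹' B)) :=
    (hident.comp measurable_snd).measure_mem_eq hmB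
  rw [hjoint, hfst, hsnd]
  -- Upper sets of a linear order are nested, so one of the two events contains the other.
  rcases (hA.preimage hν₁).total (hB.preimage hν₂) with hsub | hsub
  · have hsub' := preimage_mono (f := Z) hsub
    rw [inter_eq_left.2 hsub', min_eq_left (measure_mono hsub')]
  · have hsub' := preimage_mono (f := Z) hsub
    rw [inter_eq_right.2 hsub', min_eq_right (measure_mono hsub')]

theorem Comonotonic.measure_inter_preimage_le (hX : Measurable X) (hW : Measurable W)
    (h : Comonotonic μ X W) (hYW : IdentDistrib Y W μ μ) {A B : Set ℝ} (hA : IsUpperSet A)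
    (hB : IsUpperSet B) : μ (X ⁻¹' A ∩ Y ⁻¹' B) ≤ μ (X ⁻¹' A ∩ W ⁻¹' B) := by
  rw [h.measure_inter_preimage_eq_min hX hW hA hB,
    ← hYW.measure_mem_eq hB.ordConnected.measurableSet]
  exact le_min (measure_mono inter_subset_left) (measure_mono inter_subset_right)

theorem map_prodMk_neg_congr {X' Y' : Ω → ℝ} (hX : Measurable X) (hY : Measurable Y)
    (hX' : Measurable X') (hY' : Measurable Y')
    (h : μ.map (fun ω => (X ω, Y ω)) = μ.map fun ω => (X' ω, Y' ω)) :
    μ.map (fun ω => (X ω, -Y ω)) = μ.map fun ω => (X' ω, -Y' ω) :=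
  (IdentDistrib.comp ⟨(hX.prodMk hY).aemeasurable, (hX'.prodMk hY').aemeasurable, h⟩
    (measurable_id.prodMap measurable_neg)).map_eq

theorem Comonotonic.neg_right (hX : Measurable X) (hY : Measurable Y) (h : Comonotonic μ X Y) :
    Countermonotonic μ X (-Y) := by
  obtain ⟨Z, ν₁, ν₂, hZ, hν₁, hν₂, hlaw⟩ := h
  exact ⟨Z, ν₁, fun z => -ν₂ z, hZ, hν₁, hν₂.neg,
    map_prodMk_neg_congr hX hY (hν₁.measurable.comp hZ) (hν₂.measurable.comp hZ) hlaw⟩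

theorem Countermonotonic.neg_right (hX : Measurable X) (hY : Measurable Y)
    (h : Countermonotonic μ X Y) : Comonotonic μ X (-Y) := by
  obtain ⟨Z, ν₁, ν₂, hZ, hν₁, hν₂, hlaw⟩ := h
  exact ⟨Z, ν₁, fun z => -ν₂ z, hZ, hν₁, hν₂.neg,
    map_prodMk_neg_congr hX hY (hν₁.measurable.comp hZ) (hν₂.measurable.comp hZ) hlaw⟩

theorem comonotonic_of_integral_mul_eq [IsFiniteMeasure μ]
    (hX : Measurable X) (hY : Measurable Y) (hW : Measurable W) (hYW : IdentDistrib Y W μ μ)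
    (hco : Comonotonic μ X W) (hg₁ : StrictMono g₁) (hg₂ : StrictMono g₂)
    (hiY : Integrable (fun ω => g₁ (X ω) * g₂ (Y ω)) μ)
    (hiW : Integrable (fun ω => g₁ (X ω) * g₂ (W ω)) μ)
    (heq : ∫ ω, g₁ (X ω) * g₂ (Y ω) ∂μ = ∫ ω, g₁ (X ω) * g₂ (W ω) ∂μ) :
    Comonotonic μ X Y := by
  have hm₁ := hg₁.monotone.measurable
  have hm₂ := hg₂.monotone.measurable
  have hquad := measure_inter_preimage_Ioi_eq_of_integral_mul_eq (hm₁.comp hX) (hm₂.comp hY)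
    (hm₂.comp hW) (hYW.comp hm₂)
    (fun s t => hco.measure_inter_preimage_le hX hW hYW
      ((isUpperSet_Ioi s).preimage hg₁.monotone) ((isUpperSet_Ioi t).preimage hg₂.monotone))
    hiY hiW heq
  have preimage_Ioi {g : ℝ → ℝ} (hg : StrictMono g) (T : Ω → ℝ) (a : ℝ) :
      (g ∘ T) ⁻¹' Ioi (g a) = T ⁻¹' Ioi a := by
    ext ω
    exact hg.lt_iff_lt
  have hlaw : μ.map (fun ω => (X ω, Y ω)) = μ.map fun ω => (X ω, W ω) := by
    refine measure_ext_of_Ioi_prod_Ioi fun s t => ?_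
    have hm := (measurableSet_Ioi (a := s)).prod (measurableSet_Ioi (a := t))
    rw [Measure.map_apply (hX.prodMk hY) hm, Measure.map_apply (hX.prodMk hW) hm]
    simpa only [mk_preimage_prod, preimage_Ioi hg₁, preimage_Ioi hg₂] using hquad (g₁ s) (g₂ t)
  obtain ⟨Z, ν₁, ν₂, hZ, hν₁, hν₂, hlaw_W⟩ := hco
  exact ⟨Z, ν₁, ν₂, hZ, hν₁, hν₂, hlaw.trans hlaw_W⟩

theorem countermonotonic_of_integral_mul_eq [IsFiniteMeasure μ]
    (hX : Measurable X) (hY : Measurable Y) (hW : Measurable W) (hYW : IdentDistrib Y W μ μ)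
    (hcm : Countermonotonic μ X W) (hg₁ : StrictMono g₁) (hg₂ : StrictMono g₂)
    (hiY : Integrable (fun ω => g₁ (X ω) * g₂ (Y ω)) μ)
    (hiW : Integrable (fun ω => g₁ (X ω) * g₂ (W ω)) μ)
    (heq : ∫ ω, g₁ (X ω) * g₂ (Y ω) ∂μ = ∫ ω, g₁ (X ω) * g₂ (W ω) ∂μ) :
    Countermonotonic μ X Y := by
  have hg_neg : StrictMono fun y => -g₂ (-y) := fun a b hab => neg_lt_neg (hg₂ (neg_lt_neg hab))
  have hco : Comonotonic μ X (-Y) := by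
    refine comonotonic_of_integral_mul_eq hX hY.neg hW.neg (hYW.comp measurable_neg)
      (hcm.neg_right hX hW) hg₁ hg_neg ?_ ?_ ?_
    · simpa only [Pi.neg_apply, neg_neg, mul_neg] using hiY.fun_neg
    · simpa only [Pi.neg_apply, neg_neg, mul_neg] using hiW.fun_neg
    · simpa only [Pi.neg_apply, neg_neg, mul_neg, integral_neg, neg_inj] using heq
  simpa only [neg_neg] using hco.neg_right hX hY.neg

theorem covar_right_inj (hVW : ∫ ω, V ω ∂μ = ∫ ω, W ω ∂μ) :
    covar μ U V = covar μ U W ↔ ∫ ω, U ω * V ω ∂μ = ∫ ω, U ω * W ω ∂μ := by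
  rw [covar, covar, hVW, sub_left_inj]

end Monotonic

theorem equality_in_frechet_hoeffding_implies_co_or_countermonotonic
    {Ω : Type*} [MeasurableSpace Ω] (μ : Measure Ω) [IsProbabilityMeasure μ]
    (X Y Y' Y'' : Ω → ℝ)
    (hX : Measurable X) (hY : Measurable Y) (hY' : Measurable Y') (hY'' : Measurable Y'')
    (hid' : μ.map Y' = μ.map Y) (hid'' : μ.map Y'' = μ.map Y)
    (hcm : Countermonotonic μ X Y') (hco : Comonotonic μ X Y'')
    (g₁ g₂ : ℝ → ℝ) (hg₁ : StrictMono g₁) (hg₂ : StrictMono g₂)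
    (hiX : Integrable (fun ω => g₁ (X ω)) μ)
    (hiY : Integrable (fun ω => g₂ (Y ω)) μ)
    (hiY' : Integrable (fun ω => g₂ (Y' ω)) μ)
    (hiY'' : Integrable (fun ω => g₂ (Y'' ω)) μ)
    (hiP : Integrable (fun ω => g₁ (X ω) * g₂ (Y ω)) μ)
    (hiP' : Integrable (fun ω => g₁ (X ω) * g₂ (Y' ω)) μ)
    (hiP'' : Integrable (fun ω => g₁ (X ω) * g₂ (Y'' ω)) μ) :
    (covar μ (fun ω => g₁ (X ω)) (fun ω => g₂ (Y ω))
        = covar μ (fun ω => g₁ (X ω)) (fun ω => g₂ (Y'' ω)) →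
      Comonotonic μ X Y) ∧
    (covar μ (fun ω => g₁ (X ω)) (fun ω => g₂ (Y ω))
        = covar μ (fun ω => g₁ (X ω)) (fun ω => g₂ (Y' ω)) →
      Countermonotonic μ X Y) := by
  have hident' : IdentDistrib Y Y' μ μ := ⟨hY.aemeasurable, hY'.aemeasurable, hid'.symm⟩
  have hident'' : IdentDistrib Y Y'' μ μ := ⟨hY.aemeasurable, hY''.aemeasurable, hid''.symm⟩
  have hm₂ := hg₂.monotone.measurable
  constructor
  · intro hcov
    exact comonotonic_of_integral_mul_eq hX hY hY'' hident'' hco hg₁ hg₂ hiP hiP''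
      ((covar_right_inj (hident''.comp hm₂).integral_eq).1 hcov)
  · intro hcov
    exact countermonotonic_of_integral_mul_eq hX hY hY' hident' hcm hg₁ hg₂ hiP hiP'
      ((covar_right_inj (hident'.comp hm₂).integral_eq).1 hcov)
end

section
/- Let X, Y be real random variables on a common probability space. Then X and Y are globally positively dependent (i.e., P(X ≤ a, Y ≤ b) ≥ F_X(a)·F_Y(b) for all a, b ∈ ℝ) if and only if QCov_{α,β}(X,Y) ≥ 0 for all α, β ∈ (0,1); and X and Y are globally negatively dependent (i.e., P(X ≤ a, Y ≤ b) ≤ F_X(a)·F_Y(b) for all a, b ∈ ℝ) if and only if QCov_{α,β}(X,Y) ≤ 0 for all α, β ∈ (0,1). -/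
open MeasureTheory

/-- The CDF of a real random variable `X` under `μ`. -/
noncomputable def cdfF {Ω : Type*} [MeasurableSpace Ω] (μ : Measure Ω)
    (X : Ω → ℝ) (x : ℝ) : ℝ :=
  (μ {ω | X ω ≤ x}).toReal

/-- The lower α-quantile of `X` under `μ`. -/
noncomputable def lquant {Ω : Type*} [MeasurableSpace Ω] (μ : Measure Ω)
    (X : Ω → ℝ) (α : ℝ) : ℝ :=
  sInf {x : ℝ | α ≤ cdfF μ X x}

/-- The quantile covariance of `X` and `Y` at levels `α, β`. -/
noncomputable def QCov {Ω : Type*} [MeasurableSpace Ω] (μ : Measure Ω)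
    (X Y : Ω → ℝ) (α β : ℝ) : ℝ :=
  (μ {ω | X ω ≤ lquant μ X α ∧ Y ω ≤ lquant μ Y β}).toReal
    - cdfF μ X (lquant μ X α) * cdfF μ Y (lquant μ Y β)

/-!
Write `F` and `G` for the distribution functions of `X` and `Y`. By right-continuity of `F`, the
quantile at level `F a > 0` is a point `q ≤ a` with `F q = F a`, so `{X ≤ q}` and `{X ≤ a}` differ
by a null set. Hence the dependence gap `P(X ≤ a, Y ≤ b) - F a * G b` equals the quantile covariance
at the levels `F a`, `G b` whenever these lie in `(0, 1)`. Otherwise one of the two events has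
probability `0` or `1`, so it is independent of the other, and the gap vanishes.
-/

section GeneralizedInverse

open Set

variable {R E : Type*} [ConditionallyCompleteLinearOrder R] [TopologicalSpace R] [OrderTopology R]
  [Preorder E] [TopologicalSpace E] [ClosedIciTopology E]

lemma le_apply_csInf_setOf_le {f : R → E} {c : E} (hne : {x | c ≤ f x}.Nonempty)
    (hbdd : BddBelow {x | c ≤ f x})
    (hf : ContinuousWithinAt f (Ici (sInf {x | c ≤ f x})) (sInf {x | c ≤ f x})) :
    c ≤ f (sInf {x | c ≤ f x}) := by
  have hsub : {x | c ≤ f x} ⊆ Ici (sInf {x | c ≤ f x}) := fun _ hx => csInf_le hbdd hx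
  have hmem : f (sInf {x | c ≤ f x}) ∈ closure (Ici c) :=
    (hf.mono hsub).mem_closure (csInf_mem_closure hne hbdd) fun _ hx => hx
  rwa [isClosed_Ici.closure_eq] at hmem

end GeneralizedInverse

section DependenceGap

variable {Ω : Type*} [MeasurableSpace Ω]

/-- The amount by which the joint distribution function of `X` and `Y` exceeds the product of the
marginal ones at `(a, b)`, i.e. the covariance of the indicators of `{X ≤ a}` and `{Y ≤ b}`. Global
positive (negative) dependence says that it is nowhere negative (positive). -/
noncomputable def dependenceGap (μ : Measure Ω) (X Y : Ω → ℝ) (a b : ℝ) : ℝ :=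
  (μ {ω | X ω ≤ a ∧ Y ω ≤ b}).toReal - cdfF μ X a * cdfF μ Y b

lemma dependenceGap_comm (μ : Measure Ω) (X Y : Ω → ℝ) (a b : ℝ) :
    dependenceGap μ X Y a b = dependenceGap μ Y X b a := by
  simp only [dependenceGap, and_comm, mul_comm]

end DependenceGap

section QuantileCovariance

open Set ProbabilityTheory

variable {Ω : Type*} [MeasurableSpace Ω] {μ : Measure Ω} [IsProbabilityMeasure μ] {X Y : Ω → ℝ}

lemma cdfF_eq_cdf_map (hX : AEMeasurable X μ) : cdfF μ X = cdf (μ.map X) := by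
  ext x
  have := Measure.isProbabilityMeasure_map hX
  rw [cdf_eq_real, map_measureReal_apply_of_aemeasurable hX measurableSet_Iic]
  rfl

lemma monotone_cdfF (hX : AEMeasurable X μ) : Monotone (cdfF μ X) := by
  rw [cdfF_eq_cdf_map hX]
  exact monotone_cdf _

lemma continuousWithinAt_cdfF_Ici (hX : AEMeasurable X μ) (x : ℝ) :
    ContinuousWithinAt (cdfF μ X) (Ici x) x := by
  rw [cdfF_eq_cdf_map hX]
  exact (cdf (μ.map X)).right_continuous x

lemma bddBelow_setOf_le_cdfF (hX : AEMeasurable X μ) {α : ℝ} (hα : 0 < α) :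
    BddBelow {x | α ≤ cdfF μ X x} := by
  obtain ⟨m, hm⟩ : ∃ m, cdfF μ X m < α := by
    rw [cdfF_eq_cdf_map hX]
    exact ((tendsto_cdf_atBot _).eventually_lt_const hα).exists
  exact ⟨m, fun x hx => ((monotone_cdfF hX).reflect_lt (hm.trans_le hx)).le⟩

lemma lquant_cdfF_le (hX : AEMeasurable X μ) {a : ℝ} (ha : 0 < cdfF μ X a) :
    lquant μ X (cdfF μ X a) ≤ a :=
  csInf_le (bddBelow_setOf_le_cdfF hX ha) (le_refl (cdfF μ X a))

lemma cdfF_lquant_cdfF (hX : AEMeasurable X μ) {a : ℝ} (ha : 0 < cdfF μ X a) :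
    cdfF μ X (lquant μ X (cdfF μ X a)) = cdfF μ X a :=
  le_antisymm (monotone_cdfF hX (lquant_cdfF_le hX ha)) <|
    le_apply_csInf_setOf_le ⟨a, le_refl (cdfF μ X a)⟩ (bddBelow_setOf_le_cdfF hX ha)
      (continuousWithinAt_cdfF_Ici hX _)

lemma setOf_le_lquant_cdfF_ae_eq (hX : AEMeasurable X μ) {a : ℝ} (ha : 0 < cdfF μ X a) :
    {ω | X ω ≤ lquant μ X (cdfF μ X a)} =ᵐ[μ] {ω | X ω ≤ a} := by
  refine ae_eq_of_subset_of_measure_ge (fun ω hω => le_trans hω (lquant_cdfF_le hX ha)) ?_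
    (nullMeasurableSet_le hX aemeasurable_const) (measure_ne_top _ _)
  exact (ENNReal.toReal_le_toReal (measure_ne_top _ _) (measure_ne_top _ _)).1
    (cdfF_lquant_cdfF hX ha).ge

lemma QCov_cdfF_cdfF (hX : AEMeasurable X μ) (hY : AEMeasurable Y μ) {a b : ℝ}
    (ha : 0 < cdfF μ X a) (hb : 0 < cdfF μ Y b) :
    QCov μ X Y (cdfF μ X a) (cdfF μ Y b) = dependenceGap μ X Y a b := by
  have hjoint : μ {ω | X ω ≤ lquant μ X (cdfF μ X a) ∧ Y ω ≤ lquant μ Y (cdfF μ Y b)} =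
      μ {ω | X ω ≤ a ∧ Y ω ≤ b} :=
    measure_congr
      ((setOf_le_lquant_cdfF_ae_eq hX ha).inter (setOf_le_lquant_cdfF_ae_eq hY hb))
  rw [QCov, dependenceGap, hjoint, cdfF_lquant_cdfF hX ha, cdfF_lquant_cdfF hY hb]

lemma measureReal_inter_eq_mul_of_notMem_Ioo {s : Set Ω} (hs : NullMeasurableSet s μ)
    (h : μ.real s ∉ Ioo 0 1) (t : Set Ω) : μ.real (s ∩ t) = μ.real s * μ.real t := by
  rcases (measureReal_nonneg (μ := μ) (s := s)).eq_or_lt with h_zero | h_pos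
  · have hs_null : μ s = 0 := (measureReal_eq_zero_iff).1 h_zero.symm
    rw [← h_zero, zero_mul, measureReal_def, measure_inter_null_of_null_left t hs_null,
      ENNReal.toReal_zero]
  · have h_one : μ.real s = 1 :=
      measureReal_le_one.antisymm (not_lt.1 fun h_lt => h ⟨h_pos, h_lt⟩)
    have hs_conull : μ sᶜ = 0 :=
      (prob_compl_eq_zero_iff₀ hs).2 ((ENNReal.toReal_eq_one_iff _).1 h_one)
    rw [h_one, one_mul, inter_comm, measureReal_def, measure_inter_conull hs_conull,
      measureReal_def]

lemma dependenceGap_eq_zero_of_cdfF_notMem_Ioo (hX : AEMeasurable X μ) (Y : Ω → ℝ) {a : ℝ}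
    (ha : cdfF μ X a ∉ Ioo 0 1) (b : ℝ) : dependenceGap μ X Y a b = 0 :=
  sub_eq_zero.2 <| measureReal_inter_eq_mul_of_notMem_Ioo
    (nullMeasurableSet_le hX aemeasurable_const) ha {ω | Y ω ≤ b}

theorem global_dependence_iff_quantile_covariance_sign_general
    (hX : AEMeasurable X μ) (hY : AEMeasurable Y μ) {s : Set ℝ} (hs : 0 ∈ s) :
    (∀ a b : ℝ, dependenceGap μ X Y a b ∈ s) ↔
      ∀ α ∈ Ioo (0 : ℝ) 1, ∀ β ∈ Ioo (0 : ℝ) 1, QCov μ X Y α β ∈ s := by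
  refine ⟨fun h α _ β _ => h (lquant μ X α) (lquant μ Y β), fun h a b => ?_⟩
  by_cases ha : cdfF μ X a ∈ Ioo 0 1
  · by_cases hb : cdfF μ Y b ∈ Ioo 0 1
    · rw [← QCov_cdfF_cdfF hX hY ha.1 hb.1]
      exact h _ ha _ hb
    · rwa [dependenceGap_comm, dependenceGap_eq_zero_of_cdfF_notMem_Ioo hY X hb]
  · rwa [dependenceGap_eq_zero_of_cdfF_notMem_Ioo hX Y ha]

end QuantileCovariance

theorem global_dependence_iff_quantile_covariance_sign
    {Ω : Type*} [MeasurableSpace Ω] (μ : Measure Ω) [IsProbabilityMeasure μ]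
    (X Y : Ω → ℝ) (hX : Measurable X) (hY : Measurable Y) :
    ((∀ a b : ℝ, cdfF μ X a * cdfF μ Y b ≤ (μ {ω | X ω ≤ a ∧ Y ω ≤ b}).toReal) ↔
      ∀ α ∈ Set.Ioo (0 : ℝ) 1, ∀ β ∈ Set.Ioo (0 : ℝ) 1, 0 ≤ QCov μ X Y α β) ∧
    ((∀ a b : ℝ, (μ {ω | X ω ≤ a ∧ Y ω ≤ b}).toReal ≤ cdfF μ X a * cdfF μ Y b) ↔
      ∀ α ∈ Set.Ioo (0 : ℝ) 1, ∀ β ∈ Set.Ioo (0 : ℝ) 1, QCov μ X Y α β ≤ 0) := by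
  have h_iff {s : Set ℝ} (hs : 0 ∈ s) := global_dependence_iff_quantile_covariance_sign_general
    (hX.aemeasurable (μ := μ)) hY.aemeasurable hs
  simpa only [dependenceGap, Set.mem_Ici, Set.mem_Iic, sub_nonneg, sub_nonpos] using
    And.intro (h_iff Set.self_mem_Ici) (h_iff Set.self_mem_Iic)
end

section
/- Let X, Y be real random variables on a common probability space such that X, Y, and XY are integrable. Then the function (a,b) ↦ P(X ≤ a, Y ≤ b) − F_X(a)·F_Y(b) is Lebesgue-integrable on ℝ² and ∫_{ℝ²} (P(X ≤ a, Y ≤ b) − F_X(a)·F_Y(b)) da db = Cov(X,Y). In other words, the summary covariance induced by CDF covariance with respect to Lebesgue measure equals the classical covariance. -/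
open MeasureTheory

/-! The signed layer-cake kernel `k x a = 1_{0 ≤ a} - 1_{x ≤ a}` satisfies `∫ k x a da = x` and
`∫ |k x a| da = |x|`. For fixed `a`, the variable `k X a` is a constant minus `1_{X ≤ a}`, so the
threshold covariance at `(a, b)` is the covariance of `k X a` and `k Y b`. Centring at `0` is what
makes these variables integrable jointly in `(ω, a, b)`, and Fubini's theorem turns the integral of
their covariance into `E[XY] - E[X] E[Y]`. -/

/-- The signed layer-cake kernel: `1` on `[0, x)` if `0 ≤ x` and `-1` on `[x, 0)` if `x ≤ 0`. It
extends the layer-cake formula `x = ∫ a in [0, ∞), 1_{a < x}` to `x` of either sign. -/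
noncomputable def layerKernel (x a : ℝ) : ℝ :=
  (Set.Ici 0).indicator 1 a - (Set.Ici x).indicator 1 a

section LayerKernel

variable {x : ℝ}

lemma layerKernel_of_nonneg (hx : 0 ≤ x) : layerKernel x = (Set.Ico 0 x).indicator 1 := by
  rw [← Set.Ici_sdiff_Ici, Set.indicator_sdiff (Set.Ici_subset_Ici.2 hx)]
  rfl

lemma layerKernel_of_nonpos (hx : x ≤ 0) : layerKernel x = -(Set.Ico x 0).indicator 1 := by
  rw [← Set.Ici_sdiff_Ici, Set.indicator_sdiff (Set.Ici_subset_Ici.2 hx), neg_sub]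
  rfl

lemma measurable_uncurry_layerKernel : Measurable (Function.uncurry layerKernel) :=
  (measurable_one.indicator (measurableSet_le measurable_const measurable_snd)).sub
    (measurable_one.indicator (measurableSet_le measurable_fst measurable_snd))

lemma integrable_layerKernel (x : ℝ) : Integrable (layerKernel x) := by
  have integrable_Ico (a b : ℝ) : Integrable ((Set.Ico a b).indicator (1 : ℝ → ℝ)) :=
    (integrableOn_const (by simp)).integrable_indicator measurableSet_Ico
  rcases le_total 0 x with hx | hx
  · exact layerKernel_of_nonneg hx ▸ integrable_Ico 0 x
  · exact layerKernel_of_nonpos hx ▸ (integrable_Ico x 0).neg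

lemma integral_layerKernel (x : ℝ) : ∫ a, layerKernel x a = x := by
  rcases le_total 0 x with hx | hx
  · simp [layerKernel_of_nonneg hx, integral_indicator_one, hx]
  · simp [layerKernel_of_nonpos hx, integral_neg, integral_indicator_one, hx]

lemma integral_norm_layerKernel (x : ℝ) : ∫ a, ‖layerKernel x a‖ = |x| := by
  rcases le_total 0 x with hx | hx
  · simp [layerKernel_of_nonneg hx, norm_indicator_eq_indicator_norm, integral_indicator, hx,
      abs_of_nonneg]
  · simp [layerKernel_of_nonpos hx, norm_indicator_eq_indicator_norm, integral_indicator, hx,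
      abs_of_nonpos]

lemma layerKernel_comp_eq_sub_indicator {α : Type*} (X : α → ℝ) (a : ℝ) :
    (fun ω => layerKernel (X ω) a) =
      fun ω => (Set.Ici 0).indicator 1 a - {ω | X ω ≤ a}.indicator 1 ω :=
  rfl

end LayerKernel

section Fubini

variable {Ω : Type*} [MeasurableSpace Ω] {μ : Measure Ω} {X Y : Ω → ℝ}

lemma integrable_prod_layerKernel (hX : Integrable X μ) :
    Integrable (fun q : Ω × ℝ => layerKernel (X q.1) q.2) (μ.prod volume) := by
  have hmeas : AEMeasurable (fun q : Ω × ℝ => layerKernel (X q.1) q.2) (μ.prod volume) :=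
    measurable_uncurry_layerKernel.comp_aemeasurable
      (hX.aemeasurable.comp_fst.prodMk measurable_snd.aemeasurable)
  refine (integrable_prod_iff hmeas.aestronglyMeasurable).2
    ⟨.of_forall fun ω => integrable_layerKernel (X ω), ?_⟩
  simpa only [integral_norm_layerKernel] using hX.abs

lemma integrable_prod_layerKernel_mul (hX : AEMeasurable X μ) (hY : AEMeasurable Y μ)
    (hXY : Integrable (fun ω => X ω * Y ω) μ) :
    Integrable (fun q : Ω × ℝ × ℝ => layerKernel (X q.1) q.2.1 * layerKernel (Y q.1) q.2.2)
      (μ.prod volume) := by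
  have hmeas : AEMeasurable
      (fun q : Ω × ℝ × ℝ => layerKernel (X q.1) q.2.1 * layerKernel (Y q.1) q.2.2)
      (μ.prod volume) :=
    (measurable_uncurry_layerKernel.comp_aemeasurable
      (hX.comp_fst.prodMk measurable_snd.fst.aemeasurable)).mul
    (measurable_uncurry_layerKernel.comp_aemeasurable
      (hY.comp_fst.prodMk measurable_snd.snd.aemeasurable))
  have integral_norm (x y : ℝ) :
      ∫ p : ℝ × ℝ, ‖layerKernel x p.1 * layerKernel y p.2‖ = |x * y| := by
    simp_rw [norm_mul, Measure.volume_eq_prod]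
    rw [integral_prod_mul (‖layerKernel x ·‖) (‖layerKernel y ·‖), integral_norm_layerKernel,
      integral_norm_layerKernel, abs_mul]
  refine (integrable_prod_iff hmeas.aestronglyMeasurable).2
    ⟨.of_forall fun ω => (integrable_layerKernel (X ω)).mul_prod (integrable_layerKernel (Y ω)), ?_⟩
  simpa only [integral_norm] using hXY.abs

lemma integrable_integral_layerKernel [SFinite μ] (hX : Integrable X μ) :
    Integrable (fun a => ∫ ω, layerKernel (X ω) a ∂μ) :=
  (integrable_prod_layerKernel hX).integral_prod_right

lemma integrable_integral_layerKernel_mul [SFinite μ] (hX : AEMeasurable X μ)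
    (hY : AEMeasurable Y μ) (hXY : Integrable (fun ω => X ω * Y ω) μ) :
    Integrable (fun p : ℝ × ℝ => ∫ ω, layerKernel (X ω) p.1 * layerKernel (Y ω) p.2 ∂μ) :=
  (integrable_prod_layerKernel_mul hX hY hXY).integral_prod_right

lemma integral_integral_layerKernel [SFinite μ] (hX : Integrable X μ) :
    ∫ a, ∫ ω, layerKernel (X ω) a ∂μ = ∫ ω, X ω ∂μ := by
  rw [← integral_integral_swap (f := fun ω => layerKernel (X ω)) (integrable_prod_layerKernel hX)]
  simp_rw [integral_layerKernel]

lemma integral_integral_layerKernel_mul [SFinite μ] (hX : AEMeasurable X μ) (hY : AEMeasurable Y μ)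
    (hXY : Integrable (fun ω => X ω * Y ω) μ) :
    ∫ p : ℝ × ℝ, ∫ ω, layerKernel (X ω) p.1 * layerKernel (Y ω) p.2 ∂μ = ∫ ω, X ω * Y ω ∂μ := by
  rw [← integral_integral_swap
    (f := fun ω (p : ℝ × ℝ) => layerKernel (X ω) p.1 * layerKernel (Y ω) p.2)
    (integrable_prod_layerKernel_mul hX hY hXY)]
  simp_rw [Measure.volume_eq_prod, integral_prod_mul (layerKernel _) (layerKernel _),
    integral_layerKernel]

end Fubini

section ThresholdCovariance

open ProbabilityTheory

variable {Ω : Type*} [MeasurableSpace Ω] {μ : Measure Ω} {X Y : Ω → ℝ} {s t : Set Ω}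

lemma integral_indicator_one_of_nullMeasurableSet (hs : NullMeasurableSet s μ) :
    ∫ ω, s.indicator (1 : Ω → ℝ) ω ∂μ = μ.real s := by
  simp [integral_indicator₀ hs]

lemma memLp_indicator_one_of_nullMeasurableSet [IsFiniteMeasure μ] (hs : NullMeasurableSet s μ)
    (p : ENNReal) : MemLp (s.indicator (1 : Ω → ℝ)) p μ :=
  .of_bound (aestronglyMeasurable_one.indicator₀ hs) 1
    (.of_forall fun ω => (norm_indicator_le_norm_self 1 ω).trans norm_one.le)

lemma covariance_indicator_one [IsProbabilityMeasure μ]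
    (hs : NullMeasurableSet s μ) (ht : NullMeasurableSet t μ) :
    cov[s.indicator 1, t.indicator 1; μ] = μ.real (s ∩ t) - μ.real s * μ.real t := by
  rw [covariance_eq_sub (memLp_indicator_one_of_nullMeasurableSet hs 2)
      (memLp_indicator_one_of_nullMeasurableSet ht 2), ← Set.inter_indicator_one,
    integral_indicator_one_of_nullMeasurableSet (hs.inter ht),
    integral_indicator_one_of_nullMeasurableSet hs, integral_indicator_one_of_nullMeasurableSet ht]

lemma memLp_layerKernel_comp [IsFiniteMeasure μ] (hX : AEMeasurable X μ) (a : ℝ) (p : ENNReal) :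
    MemLp (fun ω => layerKernel (X ω) a) p μ :=
  (memLp_const _).sub <|
    memLp_indicator_one_of_nullMeasurableSet (nullMeasurableSet_le hX aemeasurable_const) p

/-- The threshold covariance `TCov_{a,b}(X, Y)`, the integrand of the summary covariance. -/
noncomputable def thresholdCov (μ : Measure Ω) (X Y : Ω → ℝ) (a b : ℝ) : ℝ :=
  (μ {ω | X ω ≤ a ∧ Y ω ≤ b}).toReal - cdfF μ X a * cdfF μ Y b

lemma covariance_layerKernel_comp [IsProbabilityMeasure μ]
    (hX : AEMeasurable X μ) (hY : AEMeasurable Y μ) (a b : ℝ) :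
    cov[fun ω => layerKernel (X ω) a, fun ω => layerKernel (Y ω) b; μ] =
      thresholdCov μ X Y a b := by
  have hs : NullMeasurableSet {ω | X ω ≤ a} μ := nullMeasurableSet_le hX aemeasurable_const
  have ht : NullMeasurableSet {ω | Y ω ≤ b} μ := nullMeasurableSet_le hY aemeasurable_const
  rw [layerKernel_comp_eq_sub_indicator, layerKernel_comp_eq_sub_indicator,
    covariance_const_sub_left
      ((memLp_indicator_one_of_nullMeasurableSet hs 1).integrable le_rfl),
    covariance_const_sub_right
      ((memLp_indicator_one_of_nullMeasurableSet ht 1).integrable le_rfl),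
    neg_neg, covariance_indicator_one hs ht]
  rfl

lemma thresholdCov_eq_integral_layerKernel [IsProbabilityMeasure μ]
    (hX : AEMeasurable X μ) (hY : AEMeasurable Y μ) (a b : ℝ) :
    thresholdCov μ X Y a b =
      ∫ ω, layerKernel (X ω) a * layerKernel (Y ω) b ∂μ -
        (∫ ω, layerKernel (X ω) a ∂μ) * ∫ ω, layerKernel (Y ω) b ∂μ := by
  rw [← covariance_layerKernel_comp hX hY,
    covariance_eq_sub (memLp_layerKernel_comp hX a 2) (memLp_layerKernel_comp hY b 2)]
  rfl

lemma integrable_thresholdCov [IsProbabilityMeasure μ] (hX : Integrable X μ) (hY : Integrable Y μ)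
    (hXY : Integrable (fun ω => X ω * Y ω) μ) :
    Integrable (fun p : ℝ × ℝ => thresholdCov μ X Y p.1 p.2) := by
  simp_rw [thresholdCov_eq_integral_layerKernel hX.aemeasurable hY.aemeasurable]
  exact (integrable_integral_layerKernel_mul hX.aemeasurable hY.aemeasurable hXY).sub
    ((integrable_integral_layerKernel hX).mul_prod (integrable_integral_layerKernel hY))

lemma integral_thresholdCov [IsProbabilityMeasure μ] (hX : Integrable X μ) (hY : Integrable Y μ)
    (hXY : Integrable (fun ω => X ω * Y ω) μ) :
    ∫ p : ℝ × ℝ, thresholdCov μ X Y p.1 p.2 = covar μ X Y := by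
  simp_rw [thresholdCov_eq_integral_layerKernel hX.aemeasurable hY.aemeasurable]
  rw [integral_sub (integrable_integral_layerKernel_mul hX.aemeasurable hY.aemeasurable hXY)
      ((integrable_integral_layerKernel hX).mul_prod (integrable_integral_layerKernel hY)),
    integral_integral_layerKernel_mul hX.aemeasurable hY.aemeasurable hXY,
    Measure.volume_eq_prod,
    integral_prod_mul (fun a => ∫ ω, layerKernel (X ω) a ∂μ) (fun b => ∫ ω, layerKernel (Y ω) b ∂μ),
    integral_integral_layerKernel hX, integral_integral_layerKernel hY, covar]

end ThresholdCovariance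

theorem summary_CDF_covariance_wrt_lebesgue_is_covariance_general
    {Ω : Type*} [MeasurableSpace Ω] (μ : Measure Ω) [IsProbabilityMeasure μ]
    (X Y : Ω → ℝ) (hXi : Integrable X μ) (hYi : Integrable Y μ)
    (hXYi : Integrable (fun ω => X ω * Y ω) μ) :
    Integrable (fun p : ℝ × ℝ =>
      (μ {ω | X ω ≤ p.1 ∧ Y ω ≤ p.2}).toReal - cdfF μ X p.1 * cdfF μ Y p.2) volume ∧
    ∫ p : ℝ × ℝ,
        ((μ {ω | X ω ≤ p.1 ∧ Y ω ≤ p.2}).toReal - cdfF μ X p.1 * cdfF μ Y p.2)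
      = covar μ X Y :=
  ⟨integrable_thresholdCov hXi hYi hXYi, integral_thresholdCov hXi hYi hXYi⟩

theorem summary_CDF_covariance_wrt_lebesgue_is_covariance
    {Ω : Type*} [MeasurableSpace Ω] (μ : Measure Ω) [IsProbabilityMeasure μ]
    (X Y : Ω → ℝ) (hX : Measurable X) (hY : Measurable Y)
    (hXi : Integrable X μ) (hYi : Integrable Y μ)
    (hXYi : Integrable (fun ω => X ω * Y ω) μ) :
    Integrable (fun p : ℝ × ℝ =>
      (μ {ω | X ω ≤ p.1 ∧ Y ω ≤ p.2}).toReal - cdfF μ X p.1 * cdfF μ Y p.2) volume ∧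
    ∫ p : ℝ × ℝ,
        ((μ {ω | X ω ≤ p.1 ∧ Y ω ≤ p.2}).toReal - cdfF μ X p.1 * cdfF μ Y p.2)
      = covar μ X Y :=
  summary_CDF_covariance_wrt_lebesgue_is_covariance_general μ X Y hXi hYi hXYi
end
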